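/- For every basic instruction a and every k ∈ ℕ, the thread extracted from the PGA-program (a;#k;#0)^ω equals a^∞ (the unique thread P satisfying P = a∘P) if k mod 3 = 2, and equals a∘D otherwise. -/

import Mathlib

/-- Primitive instructions over a set `A` of basic instructions:
basic instructions `a`, positive tests `+a`, negative tests `-a`,
jump instructions `#k` and the termination instruction `!`. -/
inductive PrimInstr (A : Type) : Type where
  | basic (a : A)
  | pos (a : A)
  | neg (a : A)
  | jump (k : Nat)
  | halt
deriving DecidableEq

/-- PGA-programs over `A`: primitive instructions, concatenation `X;Y`
and repetition `X^ω`. -/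
inductive PGA (A : Type) : Type where
  | prim (u : PrimInstr A)
  | seq (X Y : PGA A)
  | rep (X : PGA A)
deriving DecidableEq

/-- A SPI: a nonempty finite (list) or infinite (function) sequence of primitive
instructions.  (Nonemptiness always holds for denotations of PGA-programs.) -/
abbrev SPI (A : Type) : Type := List (PrimInstr A) ⊕ (ℕ → PrimInstr A)

/-- Concatenation of SPIs; if the first one is infinite, it is the result. -/
def SPI.seqc {A : Type} : SPI A → SPI A → SPI A
  | .inl l, .inl l' => .inl (l ++ l')
  | .inl l, .inr s => .inr fun n => if h : n < l.length then l.get ⟨n, h⟩ else s (n - l.length)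
  | .inr s, _ => .inr s

/-- Infinite repetition of a SPI; an infinite SPI is its own repetition.
(The `getD`-default is never relevant: SPIs of PGA-programs are nonempty.) -/
def SPI.omega {A : Type} : SPI A → SPI A
  | .inl l => .inr fun n => l.getD (n % l.length) .halt
  | .inr s => .inr s

/-- The SPI denoted by a PGA-program. -/
def PGA.spi {A : Type} : PGA A → SPI A
  | .prim u => .inl [u]
  | .seq X Y => X.spi.seqc Y.spi
  | .rep X => X.spi.omega

/-- The instruction of a SPI at a (0-based) position, if any. -/
def SPI.at? {A : Type} : SPI A → ℕ → Option (PrimInstr A)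
  | .inl l, n => l[n]?
  | .inr s, n => some (s n)

/-- The polynomial functor `X ↦ {S} ⊕ {D} ⊕ A × X × X` whose final coalgebra
is the type of threads. -/
def ThreadF (A : Type) : PFunctor.{0} :=
  ⟨Unit ⊕ Unit ⊕ A, fun s => match s with
    | .inl _ => Empty
    | .inr (.inl _) => Empty
    | .inr (.inr _) => Bool⟩

/-- Threads over `A`: the final coalgebra (coinductive type) generated by
termination `S`, deadlock `D` and postconditional composition. -/
def ThreadT (A : Type) : Type := PFunctor.M (ThreadF A)

/-- The terminating thread `S`. -/
def ThreadT.S {A : Type} : ThreadT A := PFunctor.M.mk ⟨Sum.inl (), Empty.elim⟩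

/-- The deadlocking (inactive) thread `D`. -/
def ThreadT.D {A : Type} : ThreadT A := PFunctor.M.mk ⟨Sum.inr (Sum.inl ()), Empty.elim⟩

/-- Postconditional composition `P ⊴ a ⊵ Q` (continue as `P` on reply `true`
to `a`, as `Q` on reply `false`).  Action prefix `a ∘ P` is `P ⊴ a ⊵ P`. -/
def ThreadT.post {A : Type} (a : A) (P Q : ThreadT A) : ThreadT A :=
  PFunctor.M.mk ⟨Sum.inr (Sum.inr a), fun b => match b with | true => P | false => Q⟩

/-- The size of a proper jump instruction (`#m` with `m ≥ 1`), if any. -/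
def jumpSize {A : Type} : Option (PrimInstr A) → Option ℕ
  | some (.jump (m+1)) => some (m+1)
  | _ => none

/-- Following the chain of (proper) jumps of `σ` starting at position `j`. -/
def jchain {A : Type} (σ : ℕ → Option (PrimInstr A)) (j : ℕ) : ℕ → ℕ
  | 0 => j
  | k+1 =>
    match jumpSize (σ (jchain σ j k)) with
    | some m => jchain σ j k + m
    | none => jchain σ j k

open Classical in
/-- One step of thread extraction at position `j` of the instruction sequence `σ`:
first resolve the chain of jumps from `j` (an infinite chain of jumps yields
deadlock `D`, as does jumping outside of the sequence or reaching `#0`), then read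
off the instruction: `!` gives `S`, a basic instruction `a` gives action prefix
with both continuations at the next position, a positive (negative) test gives
postconditional composition continuing at the next position upon `true` (`false`)
and at the position thereafter upon `false` (`true`). -/
noncomputable def xstep {A : Type} (σ : ℕ → Option (PrimInstr A)) (j : ℕ) :
    (ThreadF A).Obj ℕ :=
  haveI : DecidablePred fun k => jumpSize (σ (jchain σ j k)) = none := fun _ => inferInstance
  if h : ∃ k, jumpSize (σ (jchain σ j k)) = none then
    let j' := jchain σ j (Nat.find h)
    match σ j' with
    | some .halt => ⟨Sum.inl (), Empty.elim⟩
    | some (.basic a) => ⟨Sum.inr (Sum.inr a), fun _ => j' + 1⟩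
    | some (.pos a) => ⟨Sum.inr (Sum.inr a), fun b => match b with | true => j' + 1 | false => j' + 2⟩
    | some (.neg a) => ⟨Sum.inr (Sum.inr a), fun b => match b with | true => j' + 2 | false => j' + 1⟩
    | _ => ⟨Sum.inr (Sum.inl ()), Empty.elim⟩
  else ⟨Sum.inr (Sum.inl ()), Empty.elim⟩

/-- Thread extraction from an instruction-lookup function, starting at
(0-based) position `j₀`. -/
noncomputable def extractFrom {A : Type} (σ : ℕ → Option (PrimInstr A)) (j₀ : ℕ) : ThreadT A :=
  PFunctor.M.corec (xstep σ) j₀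

/-- Thread extraction `|X|` on PGA-programs: extraction along the SPI denoted
by `X`, starting at its first instruction.  This realizes exactly the defining
equations of thread extraction (Table 2 of the paper). -/
noncomputable def PGA.thread {A : Type} (X : PGA A) : ThreadT A :=
  extractFrom X.spi.at? 0

theorem jchain_shift {A : Type} (σ : ℕ → Option (PrimInstr A)) (j m : ℕ)
    (h : jumpSize (σ j) = some m) (n : ℕ) : jchain σ j (n+1) = jchain σ (j+m) n := by
  induction n with
  | zero => simp [jchain, h]
  | succ n ih => rw [jchain, ih]; rfl

/-- Reading off the instruction at position `p`. -/
def readOff {A : Type} (σ : ℕ → Option (PrimInstr A)) (p : ℕ) : (ThreadF A).Obj ℕ :=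
  match σ p with
  | some .halt => ⟨Sum.inl (), Empty.elim⟩
  | some (.basic a) => ⟨Sum.inr (Sum.inr a), fun _ => p + 1⟩
  | some (.pos a) => ⟨Sum.inr (Sum.inr a), fun b => match b with | true => p + 1 | false => p + 2⟩
  | some (.neg a) => ⟨Sum.inr (Sum.inr a), fun b => match b with | true => p + 2 | false => p + 1⟩
  | _ => ⟨Sum.inr (Sum.inl ()), Empty.elim⟩

theorem jchain_stable {A : Type} (σ : ℕ → Option (PrimInstr A)) (j n : ℕ)
    (h : jumpSize (σ (jchain σ j n)) = none) (d : ℕ) : jchain σ j (n+d) = jchain σ j n := by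
  induction d with
  | zero => rfl
  | succ d ih => rw [← Nat.add_assoc, jchain, ih, h]

theorem xstep_of_stop {A : Type} (σ : ℕ → Option (PrimInstr A)) (j n : ℕ)
    (h : jumpSize (σ (jchain σ j n)) = none) : xstep σ j = readOff σ (jchain σ j n) := by
  have h1 : ∃ k, jumpSize (σ (jchain σ j k)) = none := ⟨n, h⟩
  have key : ∃ q, jumpSize (σ (jchain σ j q)) = none ∧
      xstep σ j = readOff σ (jchain σ j q) := by
    refine ⟨_, ?_, dif_pos h1⟩
    exact @Nat.find_spec _ (_) h1
  obtain ⟨q, hq, e⟩ := key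
  rw [e]
  rcases Nat.le_total q n with hle | hle
  · obtain ⟨d, rfl⟩ := Nat.exists_eq_add_of_le hle
    rw [jchain_stable σ j q hq d]
  · obtain ⟨d, rfl⟩ := Nat.exists_eq_add_of_le hle
    rw [jchain_stable σ j n h d]

theorem xstep_of_loop {A : Type} (σ : ℕ → Option (PrimInstr A)) (j : ℕ)
    (h : ¬ ∃ n, jumpSize (σ (jchain σ j n)) = none) :
    xstep σ j = ⟨Sum.inr (Sum.inl ()), Empty.elim⟩ := dif_neg h

theorem xstep_jump {A : Type} (σ : ℕ → Option (PrimInstr A)) (j m : ℕ)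
    (h : jumpSize (σ j) = some m) : xstep σ j = xstep σ (j+m) := by
  have hs := jchain_shift σ j m h
  by_cases h2 : ∃ k, jumpSize (σ (jchain σ (j+m) k)) = none
  · obtain ⟨k, hk⟩ := h2
    rw [xstep_of_stop σ _ k hk, xstep_of_stop σ j (k+1) (by rw [hs]; exact hk), hs]
  · have h1 : ¬ ∃ k, jumpSize (σ (jchain σ j k)) = none := by
      rintro ⟨k, hk⟩
      cases k with
      | zero => simp [jchain, h] at hk
      | succ k => exact h2 ⟨k, by rw [← hs]; exact hk⟩
    rw [xstep_of_loop σ j h1, xstep_of_loop σ _ h2]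

theorem xstep_basic {A : Type} (σ : ℕ → Option (PrimInstr A)) (j : ℕ) (a : A)
    (h : σ j = some (.basic a)) : xstep σ j = ⟨Sum.inr (Sum.inr a), fun _ => j + 1⟩ := by
  rw [xstep_of_stop σ j 0 (by simp [jchain, h, jumpSize])]
  simp only [readOff, jchain, h]
  rfl

theorem xstep_zero {A : Type} (σ : ℕ → Option (PrimInstr A)) (j : ℕ)
    (h : σ j = some (.jump 0)) : xstep σ j = ⟨Sum.inr (Sum.inl ()), Empty.elim⟩ := by
  rw [xstep_of_stop σ j 0 (by simp [jchain, h, jumpSize])]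
  simp only [readOff, jchain, h]
  rfl

theorem extract_jump {A : Type} (σ : ℕ → Option (PrimInstr A)) (j m : ℕ)
    (h : jumpSize (σ j) = some m) : extractFrom σ j = extractFrom σ (j+m) := by
  unfold extractFrom
  rw [PFunctor.M.corec_def, xstep_jump σ j m h, ← PFunctor.M.corec_def]

theorem extract_basic {A : Type} (σ : ℕ → Option (PrimInstr A)) (j : ℕ) (a : A)
    (h : σ j = some (.basic a)) :
    extractFrom σ j = ThreadT.post a (extractFrom σ (j+1)) (extractFrom σ (j+1)) := by
  unfold extractFrom ThreadT.post
  rw [PFunctor.M.corec_def, xstep_basic σ j a h]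
  congr 1
  refine Sigma.ext rfl (heq_of_eq ?_)
  funext b
  cases b <;> rfl

theorem extract_of_D {A : Type} (σ : ℕ → Option (PrimInstr A)) (j : ℕ)
    (h : xstep σ j = ⟨Sum.inr (Sum.inl ()), Empty.elim⟩) :
    extractFrom σ j = ThreadT.D := by
  unfold extractFrom ThreadT.D
  rw [PFunctor.M.corec_def, h]
  congr 1
  refine Sigma.ext rfl (heq_of_eq ?_)
  funext b
  exact Empty.elim b

theorem eq_of_loop {A : Type} (a : A) (P : ThreadT A) (hP : P = ThreadT.post a P P)
    (S : ThreadT A → Prop) (hS : ∀ x, S x → ∃ y, S y ∧ x = ThreadT.post a y y)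
    (x : ThreadT A) (hx : S x) : x = P := by
  refine PFunctor.M.bisim (P := ThreadF A) (fun x y => S x ∧ y = P) ?_ x P ⟨hx, rfl⟩
  rintro x y ⟨hx, rfl⟩
  obtain ⟨z, hz, rfl⟩ := hS x hx
  refine ⟨Sum.inr (Sum.inr a), fun b => match b with | true => z | false => z,
    fun b => match b with | true => y | false => y, ?_, ?_, ?_⟩
  · exact PFunctor.M.dest_mk _
  · conv_lhs => rw [hP]
    exact PFunctor.M.dest_mk _
  · intro b
    cases b <;> exact ⟨hz, rfl⟩

/-- The thread extracted from `(a ; #k ; #0)^ω` is `a^∞` (the unique thread `P`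
with `P = a ∘ P`) if `k mod 3 = 2`, and `a ∘ D` otherwise. -/
theorem thread_of_padded_repeater (A : Type) (a : A) (k : ℕ) (P : ThreadT A)
    (hP : P = ThreadT.post a P P)
    (hPuniq : ∀ Q : ThreadT A, Q = ThreadT.post a Q Q → Q = P) :
    (PGA.rep ((PGA.prim (.basic a)).seq
        ((PGA.prim (.jump k)).seq (PGA.prim (.jump 0))))).thread =
      if k % 3 = 2 then P else ThreadT.post a ThreadT.D ThreadT.D := by
  unfold PGA.thread
  generalize hσ : (PGA.rep ((PGA.prim (.basic a)).seq
        ((PGA.prim (.jump k)).seq (PGA.prim (.jump 0))))).spi.at? = σ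
  have s0 : ∀ j, j % 3 = 0 → σ j = some (.basic a) := by
    intro j hj; subst hσ; simp [PGA.spi, SPI.seqc, SPI.omega, SPI.at?, hj]
  have s1 : ∀ j, j % 3 = 1 → σ j = some (.jump k) := by
    intro j hj; subst hσ; simp [PGA.spi, SPI.seqc, SPI.omega, SPI.at?, hj]
  have s2 : ∀ j, j % 3 = 2 → σ j = some (.jump 0) := by
    intro j hj; subst hσ; simp [PGA.spi, SPI.seqc, SPI.omega, SPI.at?, hj]
  clear hσ
  have sj : k ≠ 0 → ∀ j, j % 3 = 1 → jumpSize (σ j) = some k := by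
    intro hk j hj
    rw [s1 j hj]
    obtain ⟨m, rfl⟩ := Nat.exists_eq_succ_of_ne_zero hk
    rfl
  split_ifs with hk
  · refine eq_of_loop a P hP (fun x => ∃ j, j % 3 = 0 ∧ x = extractFrom σ j) ?_ _ ⟨0, rfl, rfl⟩
    rintro x ⟨j, hj, rfl⟩
    refine ⟨extractFrom σ (j+1), ⟨j+1+k, by omega, ?_⟩, extract_basic σ j a (s0 j hj)⟩
    exact extract_jump σ _ _ (sj (by omega) _ (by omega))
  · rw [extract_basic σ 0 a (s0 0 rfl)]
    have hD : extractFrom σ (0+1) = ThreadT.D := by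
      by_cases h0 : k = 0
      · exact extract_of_D σ _ (xstep_zero σ _ (by rw [s1 _ rfl, h0]))
      · by_cases h1 : k % 3 = 1
        · rw [extract_jump σ _ _ (sj h0 _ rfl)]
          exact extract_of_D σ _ (xstep_zero σ _ (s2 _ (by omega)))
        · apply extract_of_D
          have hc : ∀ n, jchain σ (0+1) n % 3 = 1 := by
            intro n
            induction n with
            | zero => rfl
            | succ n ih =>
              rw [jchain, sj h0 _ ih]
              show (jchain σ (0+1) n + k) % 3 = 1
              omega
          have hn : ¬ ∃ n, jumpSize (σ (jchain σ (0+1) n)) = none := by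
            rintro ⟨n, hn⟩
            rw [sj h0 _ (hc n)] at hn
            exact absurd hn (by simp)
          exact xstep_of_loop σ _ hn
    rw [hD]
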